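/- arXiv:2305.13010 — 2 statements merged into one kernel-verified Lean document; each statement's English description precedes it below -/
import Mathlib

section
/- Let k be a commutative ring, A a smooth k-algebra (of finite presentation and formally smooth), and n ≥ 1. Let μ_n : A^{⊗_k n} → A be the n-fold multiplication map and I_n = ker(μ_n), and regard I_n/I_n² as an A-module via the isomorphism A^{⊗_k n}/I_n ≅ A. Then there is an isomorphism of A-modules I_n/I_n² ≅ (Ω¹_{A/k})^{⊕(n-1)}, where Ω¹_{A/k} is the module of Kähler differentials of A over k. -/
/-!
Write `P = A^{⊗_k n}`, let `s_j : A → P` be the inclusion of the `j`-th factor, and let `A` act on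
`I = ker μ` and on `I/I²` through `s_0`. The argument uses only that `P` is the coproduct of `n`
copies of `A` in commutative `k`-algebras.

* For `i ≥ 1` the map `a ↦ [s_i a - s_0 a]` is a `k`-derivation `A → I/I²`, because `s_i a` and
  `s_0 a` act in the same way on `I/I²`. Together these derivations give an `A`-linear map
  `ψ : Ω^{n-1} → I/I²`.
* Sending `a` in the `i`-th factor to `a + ε e_i (da)`, and `a` in the `0`-th factor to `a`, gives
  an algebra map from `P` to the trivial square-zero extension `A ⊕ ε Ω^{n-1}` which lifts `μ`
  (`exists_derivation_along`). Its second component `δ` is a derivation along `μ`, so it kills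
  `I²` and induces `φ : I/I² → Ω^{n-1}`.

Then `φ ∘ ψ = id` by evaluation on the generators `e_i (da)`. For `ψ ∘ φ = id`, the map
`x ↦ s_0 (μ x) + ψ (δ x)` is an algebra map `P → P/I²` agreeing with the quotient map on every
factor, hence everywhere; on `I` its first term vanishes (`cotangentEquivOfCoproduct`).
-/

/-!
STATEMENT 6: For a smooth `k`-algebra `A` (finite presentation + formally smooth) and
`n ≥ 1`, with `μ_n : A^{⊗_k n} → A` the multiplication map and `I_n = ker μ_n`, the
conormal module `I_n/I_n²` (an `A`-module via the isomorphism `A^{⊗n}/I_n ≅ A`) is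
isomorphic to `(Ω¹_{A/k})^{⊕(n-1)}`.
-/

open scoped TensorProduct PiTensorProduct

noncomputable section

variable (k A : Type) [CommRing k] [CommRing A] [Algebra k A] (n : ℕ)

/-- The inclusion of `A` in the first tensor factor of `A^{⊗_k n}`. -/
def incl (hn : 1 ≤ n) : A →+* (⨂[k] (_ : Fin n), A) :=
  (PiTensorProduct.singleAlgHom (R := k) (A := fun _ : Fin n => A) ⟨0, hn⟩).toRingHom

/-- The `A`-module structure on `I_n/I_n²`, obtained through the canonical isomorphism
`A^{⊗_k n}/I_n ≅ A` (whose inverse is induced by the inclusion of the first factor). -/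
def cotangentModule (hn : 1 ≤ n) (μ : (⨂[k] (_ : Fin n), A) →ₐ[k] A) :
    Module A (RingHom.ker μ).Cotangent :=
  Module.compHom _ ((Ideal.Quotient.mk (RingHom.ker μ)).comp (incl k A n hn))

/-- The algebra section `a ↦ a + ε (d a)` of the trivial square-zero extension `A ⊕ ε M` attached to
a derivation `d : A → M`. -/
def tszOfDerivation {k A M : Type} [CommRing k] [CommRing A] [Algebra k A] [AddCommGroup M]
    [Module k M] [Module A M] [Module Aᵐᵒᵖ M] [IsCentralScalar A M] [IsScalarTower k A M]
    [IsScalarTower k Aᵐᵒᵖ M]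
    (d : Derivation k A M) : A →ₐ[k] TrivSqZeroExt A M :=
  AlgHom.ofLinearMap
    { toFun := fun a => TrivSqZeroExt.inl a + TrivSqZeroExt.inr (d a)
      map_add' := fun a b => by ext <;> simp
      map_smul' := fun c a => by ext <;> simp }
    (by ext <;> simp)
    (fun a b => by ext <;> simp)

/-- If `P` has the universal property of the coproduct of copies of `A` in commutative `k`-algebras
(`hext` and `hlift`), then a family of derivations `d j : A → M` is induced by a single
derivation `P → M` along `μ`. -/
theorem exists_derivation_along {k A P M J : Type} [CommRing k] [CommRing A] [Algebra k A]
    [CommRing P] [Algebra k P] [AddCommGroup M] [Module k M] [Module A M] [IsScalarTower k A M]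
    (s : J → A →ₐ[k] P) (μ : P →ₐ[k] A) (hμ : ∀ j a, μ (s j a) = a)
    (hext : ∀ (T : Type) [CommRing T] [Algebra k T] (F G : P →ₐ[k] T),
      (∀ j a, F (s j a) = G (s j a)) → F = G)
    (hlift : ∀ (T : Type) [CommRing T] [Algebra k T] (f : J → A →ₐ[k] T),
      ∃ F : P →ₐ[k] T, ∀ j a, F (s j a) = f j a)
    (d : J → Derivation k A M) :
    ∃ δ : P →ₗ[k] M, (∀ x y, δ (x * y) = μ x • δ y + μ y • δ x) ∧ ∀ j a, δ (s j a) = d j a := by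
  let : Module Aᵐᵒᵖ M := Module.compHom M ((RingHom.id A).fromOpposite mul_comm)
  have : IsCentralScalar A M := ⟨fun _ _ => rfl⟩
  have : IsScalarTower k Aᵐᵒᵖ M := ⟨fun c a m => by
    induction a with | _ a
    rw [← MulOpposite.op_smul, op_smul_eq_smul, op_smul_eq_smul, smul_assoc]⟩
  obtain ⟨F, hF⟩ := hlift (TrivSqZeroExt A M) (fun j => tszOfDerivation (d j))
  have hfst : (TrivSqZeroExt.fstHom k A M).comp F = μ :=
    hext A _ _ fun j a => by simp [hF, hμ, tszOfDerivation]
  have hfst' : ∀ x, (F x).fst = μ x := fun x => DFunLike.congr_fun hfst x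
  refine ⟨(TrivSqZeroExt.sndHom A M).restrictScalars k ∘ₗ F.toLinearMap, fun x y => ?_,
    fun j a => ?_⟩
  · simp [hfst']
  · simp [hF, tszOfDerivation]

/-- The theorem for any coproduct `P` of `m + 1` copies of `A`, viewed as an `A`-algebra through
the inclusion of the first copy. -/
theorem cotangentEquivOfCoproduct {k A P : Type} {m : ℕ} [CommRing k] [CommRing A] [Algebra k A]
    [CommRing P] [Algebra k P] [Algebra A P] [IsScalarTower k A P]
    (s : Fin (m + 1) → A →ₐ[k] P) (hs : ∀ a, algebraMap A P a = s 0 a)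
    (μ : P →ₐ[k] A) (hμ : ∀ j a, μ (s j a) = a)
    (hext : ∀ (T : Type) [CommRing T] [Algebra k T] (F G : P →ₐ[k] T),
      (∀ j a, F (s j a) = G (s j a)) → F = G)
    (hlift : ∀ (T : Type) [CommRing T] [Algebra k T] (f : Fin (m + 1) → A →ₐ[k] T),
      ∃ F : P →ₐ[k] T, ∀ j a, F (s j a) = f j a) :
    Nonempty ((RingHom.ker μ).Cotangent ≃ₗ[A] (Fin m → Ω[A⁄k])) := by
  set I := RingHom.ker μ with hI
  have hμ0 : ∀ a, μ (algebraMap A P a) = a := fun a => by rw [hs, hμ]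
  have hmem : ∀ j a, s j a - algebraMap A P a ∈ I := fun j a => by
    rw [hI, RingHom.mem_ker, map_sub, hμ, hμ0, sub_self]
  obtain ⟨δ, hδmul, hδs⟩ := exists_derivation_along (M := Fin m → Ω[A⁄k]) s μ hμ hext hlift
    (Fin.cons 0 fun i =>
      (LinearMap.single A (fun _ : Fin m => Ω[A⁄k]) i).compDer (KaehlerDifferential.D k A))
  have hδ0 : ∀ a, δ (algebraMap A P a) = 0 := fun a => by rw [hs, hδs]; simp
  have hδi : ∀ (i : Fin m) a, δ (s i.succ a) = Pi.single i (KaehlerDifferential.D k A a) :=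
    fun i a => by rw [hδs]; simp
  -- `φ₀` is the restriction of `δ` to `I`; it kills `I²` by `hφ₀`.
  let φ₀ : I →ₗ[A] (Fin m → Ω[A⁄k]) :=
    { toFun := fun x => δ x
      map_add' := fun x y => by simp
      map_smul' := fun a x => by
        have : ((a • x : I) : P) = algebraMap A P a * x := by
          rw [← Algebra.smul_def]; rfl
        rw [this, hδmul, hδ0, hμ0]; simp }
  have hφ₀ : ∀ x : I, (x : P) ∈ I ^ 2 → δ x = 0 := by
    intro x hx
    rw [pow_two] at hx
    refine Submodule.mul_induction_on hx (fun a ha b hb => ?_) fun a b ha hb => ?_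
    · rw [hδmul, (RingHom.mem_ker).1 ha, (RingHom.mem_ker).1 hb]; simp
    · rw [map_add, ha, hb, add_zero]
  let π : I →ₗ[A] I.Cotangent := I.toCotangent.restrictScalars A
  have hπ : Function.Surjective π := I.toCotangent_surjective
  -- Elements of `P` act on `I/I²` through `μ`.
  have hact : ∀ (p : P) (c : I.Cotangent), p • c = μ p • c := by
    intro p c
    rw [← algebraMap_smul P (μ p) c, ← sub_eq_zero, ← sub_smul]
    exact Ideal.Cotangent.smul_eq_zero_of_mem (by rw [hI, RingHom.mem_ker, map_sub, hμ0, sub_self]) c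
  let D : Fin m → Derivation k A I.Cotangent := fun i => Derivation.mk'
    { toFun := fun a => I.toCotangent ⟨s i.succ a - algebraMap A P a, hmem _ a⟩
      map_add' := fun a b => by
        rw [← map_add]; congr 1; ext; simp; ring
      map_smul' := fun c a => by
        rw [RingHom.id_apply, ← algebraMap_smul P c (I.toCotangent _), ← map_smul]
        congr 1; ext
        simp [Algebra.smul_def, mul_sub, ← IsScalarTower.algebraMap_apply] }
    (fun a b => by
      have h1 : a • I.toCotangent ⟨s i.succ b - algebraMap A P b, hmem _ b⟩
          = s i.succ a • I.toCotangent ⟨s i.succ b - algebraMap A P b, hmem _ b⟩ := by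
        rw [hact (s i.succ a), hμ]
      have h2 : b • I.toCotangent ⟨s i.succ a - algebraMap A P a, hmem _ a⟩
          = algebraMap A P b • I.toCotangent ⟨s i.succ a - algebraMap A P a, hmem _ a⟩ := by
        rw [hact (algebraMap A P b), hμ0]
      change I.toCotangent _ = a • I.toCotangent _ + b • I.toCotangent _
      rw [h1, h2, ← map_smul, ← map_smul, ← map_add]
      congr 1; ext; simp [Algebra.smul_def]; ring)
  have hD : ∀ i a, D i a = I.toCotangent ⟨s i.succ a - algebraMap A P a, hmem _ a⟩ :=
    fun i a => rfl
  let ψ : (Fin m → Ω[A⁄k]) →ₗ[A] I.Cotangent :=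
    LinearMap.lsum A (fun _ => Ω[A⁄k]) A fun i => (D i).liftKaehlerDifferential
  have hψ : ∀ i a, ψ (Pi.single i (KaehlerDifferential.D k A a)) = D i a := fun i a => by
    simp only [ψ, LinearMap.lsum_apply, LinearMap.sum_apply, LinearMap.comp_apply,
      LinearMap.proj_apply]
    rw [Finset.sum_eq_single i (fun j _ hj => by simp [hj]) (by simp)]
    simp
  let ι : I.Cotangent →ₗ[A] P ⧸ I ^ 2 := I.cotangentToQuotientSquare.restrictScalars A
  have hι : ∀ x : I, ι (π x) = Ideal.Quotient.mk (I ^ 2) (x : P) := fun x => rfl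
  have hιinj : Function.Injective ι := I.cotangentToQuotientSquare_injective
  have hιmul : ∀ c c', ι c * ι c' = 0 := by
    intro c c'
    obtain ⟨x, rfl⟩ := hπ c
    obtain ⟨y, rfl⟩ := hπ c'
    rw [hι, hι, ← map_mul, Ideal.Quotient.eq_zero_iff_mem, pow_two]
    exact Ideal.mul_mem_mul x.2 y.2
  have hιsmul : ∀ a c, ι (a • c) = algebraMap A (P ⧸ I ^ 2) a * ι c := fun a c => by
    rw [map_smul, Algebra.smul_def]
  -- The algebra map `x ↦ s₀ (μ x) + ψ (δ x)`.
  let G : P →ₐ[k] P ⧸ I ^ 2 := AlgHom.ofLinearMap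
    ((IsScalarTower.toAlgHom k A (P ⧸ I ^ 2)).toLinearMap ∘ₗ μ.toLinearMap
      + (ι ∘ₗ ψ).restrictScalars k ∘ₗ δ)
    (by
      have : δ 1 = 0 := by rw [← map_one (algebraMap A P), hδ0]
      simp [this])
    (fun x y => by
      have h := hιmul (ψ (δ x)) (ψ (δ y))
      simp only [LinearMap.add_apply, LinearMap.comp_apply, AlgHom.toLinearMap_apply, map_mul,
        LinearMap.restrictScalars_apply, hδmul, map_add, map_smul ψ, hιsmul,
        IsScalarTower.coe_toAlgHom']
      linear_combination -h)
  have hG : ∀ x, G x = algebraMap A (P ⧸ I ^ 2) (μ x) + ι (ψ (δ x)) := fun x => rfl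
  have hGmk : G = Ideal.Quotient.mkₐ k (I ^ 2) := by
    refine hext _ _ _ fun j a => ?_
    rw [hG, hμ]
    refine Fin.cases ?_ (fun i => ?_) j
    · rw [← hs, hδ0, map_zero, map_zero, add_zero]
      rfl
    · rw [hδi, hψ, hD]
      change Ideal.Quotient.mk (I ^ 2) (algebraMap A P a)
        + Ideal.Quotient.mk (I ^ 2) (s i.succ a - algebraMap A P a) = _
      rw [← map_add, add_sub_cancel]
      rfl
  have hψφ : ∀ x : I, ψ (δ x) = π x := fun x => by
    apply hιinj
    have h := DFunLike.congr_fun hGmk (x : P)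
    rw [hG, (RingHom.mem_ker).1 x.2, map_zero, zero_add] at h
    exact h
  have hφψ : ∀ v, ∀ x : I, π x = ψ v → δ x = v := by
    -- It suffices to find one representative `x` of `ψ v`, since `δ` kills `I²`.
    suffices H : ∀ v, ∃ x : I, π x = ψ v ∧ δ x = v by
      intro v x hx
      obtain ⟨y, hy, rfl⟩ := H v
      have : δ (x - y : I) = 0 := hφ₀ _ (I.toCotangent_eq.1 (hx.trans hy.symm))
      rwa [AddSubgroupClass.coe_sub, map_sub, sub_eq_zero] at this
    intro v
    have hv : v ∈ Submodule.map φ₀ ⊤ := by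
      rw [← LinearMap.sum_single_apply (fun _ => Ω[A⁄k]) v]
      refine Submodule.sum_mem _ fun i _ => ?_
      have hw : v i ∈ Submodule.span A (Set.range (KaehlerDifferential.D k A)) := by
        rw [KaehlerDifferential.span_range_derivation]; trivial
      refine (Submodule.span_le.2 ?_ :
        _ ≤ (Submodule.map φ₀ ⊤).comap (LinearMap.single A (fun _ => Ω[A⁄k]) i)) hw
      rintro _ ⟨a, rfl⟩
      refine ⟨⟨s i.succ a - algebraMap A P a, hmem _ a⟩, trivial, ?_⟩
      change δ (s i.succ a - algebraMap A P a) = _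
      rw [map_sub, hδ0, hδi, sub_zero]
      rfl
    obtain ⟨x, -, rfl⟩ := hv
    exact ⟨x, (hψφ x).symm, rfl⟩
  refine ⟨(LinearEquiv.ofBijective ψ ⟨fun v w h => ?_, fun c => ?_⟩).symm⟩
  · obtain ⟨x, hx⟩ := hπ (ψ v)
    rw [← hφψ v x hx, hφψ w x (hx.trans h)]
  · obtain ⟨x, rfl⟩ := hπ c
    exact ⟨δ x, hψφ x⟩

theorem stmt6 [Algebra.FormallySmooth k A] [Algebra.FinitePresentation k A]
    (hn : 1 ≤ n) (μ : (⨂[k] (_ : Fin n), A) →ₐ[k] A)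
    (hμ : ∀ a : Fin n → A, μ (PiTensorProduct.tprod k a) = ∏ i, a i) :
    letI : Module A (RingHom.ker μ).Cotangent := cotangentModule k A n hn μ
    Nonempty ((RingHom.ker μ).Cotangent ≃ₗ[A] (Fin (n - 1) → Ω[A⁄k])) := by
  obtain ⟨m, rfl⟩ : ∃ m, n = m + 1 := ⟨n - 1, by omega⟩
  let : Algebra A (⨂[k] (_ : Fin (m + 1)), A) := (incl k A (m + 1) hn).toAlgebra
  have : IsScalarTower k A (⨂[k] (_ : Fin (m + 1)), A) := IsScalarTower.of_algebraMap_eq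
    fun c => ((PiTensorProduct.singleAlgHom (R := k) (A := fun _ : Fin (m + 1) => A)
      ⟨0, hn⟩).commutes c).symm
  obtain ⟨e⟩ := cotangentEquivOfCoproduct (k := k) (A := A)
    (P := ⨂[k] (_ : Fin (m + 1)), A) (m := m)
    (fun j => PiTensorProduct.singleAlgHom (R := k) (A := fun _ : Fin (m + 1) => A) j)
    (fun a => rfl) μ
    (fun j a => by
      rw [PiTensorProduct.singleAlgHom_apply, hμ, MonoidHom.mulSingle_apply]
      exact Fintype.prod_pi_mulSingle' j a)
    (fun T _ _ F G h => PiTensorProduct.algHom_ext fun j => AlgHom.ext fun a => h j a)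
    (fun T _ _ f => by
      refine ⟨PiTensorProduct.liftAlgHom
        ((MultilinearMap.mkPiAlgebra k (Fin (m + 1)) T).compLinearMap fun j => (f j).toLinearMap)
        (by simp) (fun x y => by simp [Finset.prod_mul_distrib]), fun j a => ?_⟩
      refine (PiTensorProduct.lift.tprod _).trans ?_
      simp only [MultilinearMap.compLinearMap_apply, MultilinearMap.mkPiAlgebra_apply,
        MonoidHom.mulSingle_apply, AlgHom.toLinearMap_apply]
      rw [Finset.prod_eq_single j (fun i _ hi => by simp [hi]) (by simp)]
      simp)
  -- The `A`-action through `P/I` is the one through `P`, on which `e` is linear.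
  have hsmul : ∀ (a : A) (c : (RingHom.ker μ).Cotangent),
      (cotangentModule k A (m + 1) hn μ).toSMul.smul a c = a • c := by
    intro a c
    obtain ⟨x, rfl⟩ := (RingHom.ker μ).toCotangent_surjective c
    rfl
  exact ⟨@LinearEquiv.mk _ _ _ _ _ _ _ _ _ _ _ _ (cotangentModule k A (m + 1) hn μ) _
    (@LinearMap.mk _ _ _ _ _ _ _ _ _ (cotangentModule k A (m + 1) hn μ) _
      e.toAddEquiv.toAddMonoidHom.toAddHom
      fun a c => (congrArg e (hsmul a c)).trans (e.map_smul a c))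
    e.symm e.left_inv e.right_inv⟩
end
end

section
/- Let k be a commutative ring. Suppose given, for every smooth k-algebra A (of finite presentation and formally smooth), an A-linear endomorphism η_A of the module of Kähler differentials Ω¹_{A/k}, such that for every k-algebra homomorphism f : A → B between smooth k-algebras the naturality square commutes: Ω¹(f) ∘ η_A = η_B ∘ Ω¹(f), where Ω¹(f) : Ω¹_{A/k} → Ω¹_{B/k} is the canonical map induced by f. Then there exists λ ∈ k such that η_A is multiplication by λ for every smooth k-algebra A. -/
/-!
Let `η (dT) = p(T) dT` on `k[T]`. For an element `a` of a smooth algebra `A`, naturality along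
`T ↦ a` gives `η (da) = p(a) da`. Apply this in `k[X₀, X₁]` to `X₀`, `X₁` and `X₀ + X₁`: since `η` is
additive and `dX₀`, `dX₁` form a basis, `p(X₀ + X₁) = p(X₀)`. Substituting `X₀ = 0`, `X₁ = T` shows
that `p` is the constant `p(0)`. As the differentials `da` span `Ω[A⁄k]`, `η` is multiplication
by `p(0)`.
-/

universe u

theorem stmt9 (k : Type u) [CommRing k]
    (η : ∀ (A : Type u) [CommRing A] [Algebra k A]
      [Algebra.FormallySmooth k A] [Algebra.FinitePresentation k A],
      Ω[A⁄k] →ₗ[A] Ω[A⁄k])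
    (hnat : ∀ (A B : Type u) [CommRing A] [Algebra k A] [CommRing B] [Algebra k B]
      [Algebra.FormallySmooth k A] [Algebra.FinitePresentation k A]
      [Algebra.FormallySmooth k B] [Algebra.FinitePresentation k B]
      (f : A →ₐ[k] B),
      letI : Algebra A B := f.toRingHom.toAlgebra
      haveI : IsScalarTower k A B :=
        IsScalarTower.of_algebraMap_eq fun c => (f.commutes c).symm
      ∀ x : Ω[A⁄k],
        KaehlerDifferential.map k k A B (η A x) = η B (KaehlerDifferential.map k k A B x)) :
    ∃ lam : k, ∀ (A : Type u) [CommRing A] [Algebra k A]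
      [Algebra.FormallySmooth k A] [Algebra.FinitePresentation k A] (x : Ω[A⁄k]),
      η A x = lam • x := by
  classical
  obtain ⟨p, hp⟩ : ∃ p : Polynomial k, η (Polynomial k) (KaehlerDifferential.D k _ Polynomial.X)
      = p • KaehlerDifferential.D k _ Polynomial.X := by
    refine ⟨KaehlerDifferential.polynomialEquiv k (η (Polynomial k) (KaehlerDifferential.D k _ Polynomial.X)), ?_⟩
    apply (KaehlerDifferential.polynomialEquiv k).injective
    simp
  have key : ∀ (A : Type u) [CommRing A] [Algebra k A]
      [Algebra.FormallySmooth k A] [Algebra.FinitePresentation k A] (a : A),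
      η A (KaehlerDifferential.D k A a) = Polynomial.aeval a p • KaehlerDifferential.D k A a := by
    intro A _ _ _ _ a
    have h := hnat (Polynomial k) A (Polynomial.aeval a) (KaehlerDifferential.D k _ Polynomial.X)
    let : Algebra (Polynomial k) A := (Polynomial.aeval a).toRingHom.toAlgebra
    have : IsScalarTower k (Polynomial k) A :=
      IsScalarTower.of_algebraMap_eq fun c => ((Polynomial.aeval a).commutes c).symm
    have e : ∀ q : Polynomial k, algebraMap (Polynomial k) A q = Polynomial.aeval a q :=
      fun _ => rfl
    rw [hp, map_smul, KaehlerDifferential.map_D, e, Polynomial.aeval_X, ← algebraMap_smul A p, e] at h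
    exact h.symm
  have hconst : p = Polynomial.C (p.coeff 0) := by
    let b := KaehlerDifferential.mvPolynomialBasis k (Fin 2)
    have h := key (MvPolynomial (Fin 2) k) (MvPolynomial.X 0 + MvPolynomial.X 1)
    rw [map_add, map_add, key, key] at h
    -- The coefficient of `dX₀` on both sides.
    have h0 := congrArg (fun x => b.repr x 0) h
    simp [b, KaehlerDifferential.mvPolynomialBasis_repr_D_X] at h0
    have h1 := congrArg (MvPolynomial.aeval ![0, (Polynomial.X : Polynomial k)]) h0
    rw [← Polynomial.aeval_algHom_apply, ← Polynomial.aeval_algHom_apply] at h1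
    have h2 : Polynomial.aeval (0 : Polynomial k) p = Polynomial.C (p.coeff 0) := by
      rw [Polynomial.aeval_def, Polynomial.eval₂_at_zero, Polynomial.algebraMap_eq]
    rw [← h2]
    simpa using h1.symm
  refine ⟨p.coeff 0, fun A _ _ _ _ x => ?_⟩
  have hx : x ∈ Submodule.span A (Set.range (KaehlerDifferential.D k A)) := by
    rw [KaehlerDifferential.span_range_derivation]; trivial
  induction hx using Submodule.span_induction with
  | mem x hx =>
    obtain ⟨a, rfl⟩ := hx
    rw [key, hconst]
    simp
  | zero => simp
  | add x y _ _ hx hy => rw [map_add, hx, hy, smul_add]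
  | smul a x _ hx => rw [map_smul, hx, smul_comm]
end
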